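/- arXiv:1806.07957 — 2 statements merged into one kernel-verified Lean document; each statement's English description precedes it below -/
import Mathlib

section
/- Fix v ≥ 0 and define R_c(u,v) = Γ(c+u,v)/Γ(u,v) for c > 0 and u > 0, where Γ(u,v) is the upper incomplete gamma function. Then the function (c,u) ↦ R_c(u,v) is strictly totally positive of order infinity on (0,∞)²: for every r ≥ 1 and all c₁ > c₂ > ⋯ > c_r > 0 and u₁ > u₂ > ⋯ > u_r > 0, the r×r determinant det( (R_{c_i}(u_j,v))_{i,j=1}^r ) is strictly positive. -/
open MeasureTheory

/-- The upper incomplete gamma function `Γ(u,v) = ∫_v^∞ x^(u-1) e^(-x) dx`. -/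
noncomputable def upperGamma (u v : ℝ) : ℝ :=
  ∫ x in Set.Ioi v, x ^ (u - 1) * Real.exp (-x)

lemma exp_indep_aux : ∀ (n : ℕ) (b a t : Fin n → ℝ), Function.Injective b → StrictMono t →
    (∀ k, ∑ i, a i * Real.exp (b i * t k) = 0) → a = 0 := by
  intro n
  induction n with
  | zero => intro b a t _ _ _; exact Subsingleton.elim _ _
  | succ n ih =>
    intro b a t hb ht h
    have hd : ∀ x : ℝ, HasDerivAt (fun x => ∑ i, a i * Real.exp ((b i - b 0) * x))
        (∑ i, a i * (Real.exp ((b i - b 0) * x) * (b i - b 0))) x := by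
      intro x
      apply HasDerivAt.fun_sum
      intro i _
      apply HasDerivAt.const_mul
      have := ((hasDerivAt_id x).const_mul (b i - b 0)).exp
      simpa using this
    have hz : ∀ k, ∑ i, a i * Real.exp ((b i - b 0) * t k) = 0 := by
      intro k
      have : ∑ i, a i * Real.exp ((b i - b 0) * t k)
          = Real.exp (-(b 0 * t k)) * ∑ i, a i * Real.exp (b i * t k) := by
        rw [Finset.mul_sum]
        refine Finset.sum_congr rfl fun i _ => ?_
        rw [show (b i - b 0) * t k = -(b 0 * t k) + b i * t k by ring, Real.exp_add]
        ring
      rw [this, h k, mul_zero]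
    have hr : ∀ k : Fin n, ∃ s ∈ Set.Ioo (t k.castSucc) (t k.succ),
        ∑ i, a i * (Real.exp ((b i - b 0) * s) * (b i - b 0)) = 0 := by
      intro k
      refine exists_hasDerivAt_eq_zero (ht Fin.castSucc_lt_succ)
        (fun x _ => (hd x).continuousAt.continuousWithinAt) ?_ (fun x _ => hd x)
      simp only [hz]
    choose s hs hs0 using hr
    have hsm : StrictMono s := by
      intro k l hkl
      calc s k < t k.succ := (hs k).2
        _ ≤ t l.castSucc := ht.monotone (by
            rw [Fin.le_def]; simp; omega)
        _ < s l := (hs l).1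
    have h1 := ih (fun i => b i.succ - b 0) (fun i => a i.succ * (b i.succ - b 0)) s
      (by
        intro i j hij
        have : b i.succ = b j.succ := by simpa using hij
        exact Fin.succ_injective _ (hb this)) hsm (by
        intro k
        have := hs0 k
        rw [Fin.sum_univ_succ] at this
        simp only [sub_self, mul_zero, zero_add] at this
        rw [← this]
        refine Finset.sum_congr rfl fun i _ => ?_
        ring)
    have h2 : ∀ i : Fin n, a i.succ = 0 := by
      intro i
      have := congrFun h1 i
      simp only [Pi.zero_apply, mul_eq_zero] at this
      rcases this with h | h
      · exact h
      · exact absurd (hb (sub_eq_zero.1 h)) (Fin.succ_ne_zero i)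
    have h3 := hz 0
    rw [Fin.sum_univ_succ] at h3
    simp [h2] at h3
    funext i
    refine Fin.cases ?_ ?_ i
    · simpa using h3
    · intro i; simpa using h2 i

lemma exp_indep (n : ℕ) (b a t : Fin n → ℝ) (hb : Function.Injective b)
    (ht : Function.Injective t)
    (h : ∀ k, ∑ i, a i * Real.exp (b i * t k) = 0) : a = 0 := by
  refine exp_indep_aux n b a (t ∘ Tuple.sort t) hb ?_ (fun k => h _)
  exact (Tuple.monotone_sort t).strictMono_of_injective (ht.comp (Tuple.sort t).injective)

lemma det_rpow_ne_zero {n : ℕ} (c x : Fin n → ℝ) (hc : Function.Injective c)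
    (hx : Function.Injective x) (hx0 : ∀ k, 0 < x k) :
    (Matrix.of fun i k : Fin n => x k ^ c i).det ≠ 0 := by
  intro h
  obtain ⟨a, ha, h⟩ := Matrix.exists_vecMul_eq_zero_iff.2 h
  apply ha
  refine exp_indep n c a (fun k => Real.log (x k)) hc ?_ ?_
  · intro i j hij
    exact hx (Real.log_injOn_pos (hx0 i) (hx0 j) hij)
  · intro k
    have := congrFun h k
    simp only [Matrix.vecMul, dotProduct, Matrix.of_apply, Pi.zero_apply] at this
    rw [← this]
    refine Finset.sum_congr rfl fun i _ => ?_
    rw [Real.rpow_def_of_pos (hx0 k), mul_comm (c i)]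

lemma det_mul_pos {n : ℕ} (c u x : Fin n → ℝ) (hc : StrictAnti c) (hu : StrictAnti u)
    (hx : Function.Injective x) (hx0 : ∀ k, 0 < x k) :
    0 < (Matrix.of fun i k : Fin n => x k ^ c i).det *
      (Matrix.of fun i k : Fin n => x k ^ u i).det := by
  set D : ℝ → ℝ := fun s => (Matrix.of fun i k : Fin n => x k ^ ((1 - s) * c i + s * u i)).det *
      (Matrix.of fun i k : Fin n => x k ^ u i).det with hD
  have hcont : Continuous D := by
    refine Continuous.mul ?_ continuous_const
    refine Continuous.matrix_det ?_
    refine continuous_matrix fun i k => ?_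
    simp only [Matrix.of_apply]
    exact Continuous.rpow continuous_const (by fun_prop) (fun _ => Or.inl (hx0 k).ne')
  have hne : ∀ s ∈ Set.Icc (0:ℝ) 1, D s ≠ 0 := by
    intro s hs
    refine mul_ne_zero (det_rpow_ne_zero _ x ?_ hx hx0) (det_rpow_ne_zero _ x hu.injective hx hx0)
    refine StrictAnti.injective (fun i j hij => ?_)
    have h1 := hc hij
    have h2 := hu hij
    obtain ⟨h3, h4⟩ := hs
    rcases eq_or_lt_of_le h3 with h | h
    · subst h; simpa using h1
    · have := mul_lt_mul_of_pos_left h2 h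
      have := mul_le_mul_of_nonneg_left h1.le (sub_nonneg.2 h4)
      show (1 - s) * c j + s * u j < (1 - s) * c i + s * u i
      linarith
  have h1 : 0 < D 1 := by
    have := hne 1 (by simp)
    have h' : 0 ≤ D 1 := by
      simp only [hD, sub_self, zero_mul, zero_add, one_mul]
      exact mul_self_nonneg _
    exact lt_of_le_of_ne h' this.symm
  have h0 : 0 < D 0 := by
    by_contra hcon
    obtain ⟨s, hs, hs0⟩ := intermediate_value_Icc (zero_le_one) hcont.continuousOn
      (show (0:ℝ) ∈ Set.Icc (D 0) (D 1) from ⟨not_lt.1 hcon, h1.le⟩)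
    exact hne s hs hs0
  simpa [hD] using h0

lemma det_mul_nonneg {n : ℕ} (c u x : Fin n → ℝ) (hc : StrictAnti c) (hu : StrictAnti u)
    (hx0 : ∀ k, 0 < x k) :
    0 ≤ (Matrix.of fun i k : Fin n => x k ^ c i).det *
      (Matrix.of fun i k : Fin n => x k ^ u i).det := by
  by_cases hx : Function.Injective x
  · exact (det_mul_pos c u x hc hu hx hx0).le
  · simp only [Function.Injective, not_forall] at hx
    obtain ⟨i, j, hij, hne⟩ := hx
    rw [Matrix.det_zero_of_column_eq hne (fun k => by simp [hij]), zero_mul]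

open Equiv in
lemma sum_sum_det {n : ℕ} (M : Matrix (Fin n) (Fin n) ℝ) :
    ∑ σ : Perm (Fin n), ∑ τ : Perm (Fin n), ((Perm.sign σ : ℤ) : ℝ) * ((Perm.sign τ : ℤ) : ℝ) *
      ∏ k, M (σ k) (τ k) = (n.factorial : ℝ) * M.det := by
  have : ∀ σ : Perm (Fin n), ∑ τ : Perm (Fin n),
      ((Perm.sign σ : ℤ) : ℝ) * ((Perm.sign τ : ℤ) : ℝ) * ∏ k, M (σ k) (τ k) = M.det := by
    intro σ
    have h := Matrix.det_permute σ M
    have h2 : (M.submatrix σ id).det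
        = ∑ τ : Perm (Fin n), ((Perm.sign τ : ℤ) : ℝ) * ∏ k, M (σ k) (τ k) := by
      rw [← Matrix.det_transpose, Matrix.det_apply']
      rfl
    simp only [mul_assoc]
    rw [← Finset.mul_sum, ← h2, h, ← mul_assoc]
    rw [← Int.cast_mul, Int.units_coe_mul_self]
    simp
  rw [Finset.sum_congr rfl (fun σ _ => this σ)]
  simp [Fintype.card_perm]

lemma andreief {n : ℕ} (μ : Measure ℝ) [SigmaFinite μ] (f g : Fin n → ℝ → ℝ)
    (hfg : ∀ i j, Integrable (fun x => f i x * g j x) μ) :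
    Integrable (fun x : Fin n → ℝ => (Matrix.of fun i k : Fin n => f i (x k)).det *
      (Matrix.of fun i k : Fin n => g i (x k)).det) (Measure.pi fun _ => μ) ∧
    ∫ x : Fin n → ℝ, (Matrix.of fun i k : Fin n => f i (x k)).det *
      (Matrix.of fun i k : Fin n => g i (x k)).det ∂(Measure.pi fun _ => μ)
      = (n.factorial : ℝ) * (Matrix.of fun i j : Fin n => ∫ x, f i x * g j x ∂μ).det := by
  have hexp : (fun x : Fin n → ℝ => (Matrix.of fun i k : Fin n => f i (x k)).det *
      (Matrix.of fun i k : Fin n => g i (x k)).det) = fun x =>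
      ∑ σ : Equiv.Perm (Fin n), ∑ τ : Equiv.Perm (Fin n),
        ((Equiv.Perm.sign σ : ℤ) : ℝ) * ((Equiv.Perm.sign τ : ℤ) : ℝ) *
        ∏ k, (f (σ k) (x k) * g (τ k) (x k)) := by
    funext x
    rw [Matrix.det_apply', Matrix.det_apply', Finset.sum_mul_sum]
    refine Finset.sum_congr rfl fun σ _ => Finset.sum_congr rfl fun τ _ => ?_
    simp only [Matrix.of_apply, Finset.prod_mul_distrib]
    ring
  have hint : ∀ σ τ : Equiv.Perm (Fin n), Integrable (fun x : Fin n → ℝ =>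
      ((Equiv.Perm.sign σ : ℤ) : ℝ) * ((Equiv.Perm.sign τ : ℤ) : ℝ) *
        ∏ k, (f (σ k) (x k) * g (τ k) (x k))) (Measure.pi fun _ => μ) := by
    intro σ τ
    refine Integrable.const_mul ?_ _
    exact Integrable.fintype_prod (f := fun k y => f (σ k) y * g (τ k) y)
      (fun k => hfg (σ k) (τ k))
  rw [hexp]
  refine ⟨integrable_finsetSum _ fun σ _ => integrable_finsetSum _ fun τ _ => hint σ τ, ?_⟩
  rw [integral_finsetSum _ fun σ _ => integrable_finsetSum _ fun τ _ => hint σ τ]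
  rw [← sum_sum_det]
  refine Finset.sum_congr rfl fun σ _ => ?_
  rw [integral_finsetSum _ fun τ _ => hint σ τ]
  refine Finset.sum_congr rfl fun τ _ => ?_
  rw [integral_const_mul]
  congr 1
  exact integral_fintype_prod_eq_prod (fun k y => f (σ k) y * g (τ k) y)

lemma gamma_integrable (v : ℝ) (hv : 0 ≤ v) (u : ℝ) (hu : 0 < u) :
    IntegrableOn (fun x => x ^ (u - 1) * Real.exp (-x)) (Set.Ioi v) := by
  have := (Real.GammaIntegral_convergent hu).mono_set (Set.Ioi_subset_Ioi hv)
  simpa only [mul_comm] using this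

lemma upperGamma_pos (v : ℝ) (hv : 0 ≤ v) (u : ℝ) (hu : 0 < u) : 0 < upperGamma u v := by
  unfold upperGamma
  have hp : ∀ x ∈ Set.Ioi v, 0 < x ^ (u - 1) * Real.exp (-x) := fun x hx =>
    mul_pos (Real.rpow_pos_of_pos (hv.trans_lt hx) _) (Real.exp_pos _)
  rw [setIntegral_pos_iff_support_of_nonneg_ae
    (ae_restrict_of_forall_mem measurableSet_Ioi fun x hx => (hp x hx).le)
    (gamma_integrable v hv u hu)]
  rw [Set.inter_eq_right.2 fun x hx => Function.mem_support.2 (hp x hx).ne']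
  simp

lemma det_gamma_pos (v : ℝ) (hv : 0 ≤ v) (n : ℕ) (c u : Fin n → ℝ)
    (hc0 : ∀ i, 0 < c i) (hu0 : ∀ i, 0 < u i) (hc : StrictAnti c) (hu : StrictAnti u) :
    0 < (Matrix.of fun i j : Fin n => upperGamma (c i + u j) v).det := by
  set μ := (volume : Measure ℝ).restrict (Set.Ioi v) with hμ
  set f : Fin n → ℝ → ℝ := fun i x => x ^ c i
  set g : Fin n → ℝ → ℝ := fun j x => x⁻¹ * Real.exp (-x) * x ^ u j
  have hfg : ∀ i j, ∀ x ∈ Set.Ioi v, x ^ (c i + u j - 1) * Real.exp (-x) = f i x * g j x := by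
    intro i j x hx
    have hx0 : 0 < x := hv.trans_lt hx
    simp only [f, g]
    rw [Real.rpow_sub hx0, Real.rpow_add hx0, Real.rpow_one]
    field_simp
  have hI : ∀ i j, Integrable (fun x => f i x * g j x) μ := fun i j =>
    (gamma_integrable v hv (c i + u j) (add_pos (hc0 i) (hu0 j))).congr_fun (hfg i j)
      measurableSet_Ioi
  obtain ⟨hA, hB⟩ := andreief μ f g hI
  have hM : (Matrix.of fun i j : Fin n => ∫ x, f i x * g j x ∂μ)
      = Matrix.of fun i j : Fin n => upperGamma (c i + u j) v := by
    ext i j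
    exact (setIntegral_congr_fun measurableSet_Ioi (hfg i j)).symm
  rw [hM] at hB
  have hg : ∀ x : Fin n → ℝ, (Matrix.of fun i k : Fin n => g i (x k)).det
      = (∏ k, ((x k)⁻¹ * Real.exp (-(x k)))) * (Matrix.of fun i k : Fin n => x k ^ u i).det :=
    fun x => Matrix.det_mul_row (fun k => (x k)⁻¹ * Real.exp (-(x k))) _
  have hw : ∀ x : Fin n → ℝ, (∀ k, 0 < x k) → 0 < ∏ k, ((x k)⁻¹ * Real.exp (-(x k))) :=
    fun x hx => Finset.prod_pos fun k _ => mul_pos (inv_pos.2 (hx k)) (Real.exp_pos _)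
  have hpi : (Measure.pi fun _ : Fin n => μ)
      = (volume : Measure (Fin n → ℝ)).restrict (Set.univ.pi fun _ => Set.Ioi v) := by
    rw [volume_pi, Measure.restrict_pi_pi]
  have hms : MeasurableSet (Set.univ.pi fun _ : Fin n => Set.Ioi v) :=
    MeasurableSet.univ_pi fun _ => measurableSet_Ioi
  rw [hpi] at hA hB
  have hpos : 0 < ∫ x in (Set.univ.pi fun _ : Fin n => Set.Ioi v),
      (Matrix.of fun i k : Fin n => f i (x k)).det *
      (Matrix.of fun i k : Fin n => g i (x k)).det := by
    rw [setIntegral_pos_iff_support_of_nonneg_ae _ hA]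
    · have hsub : (Set.univ.pi fun k : Fin n => Set.Ioo (v + (k : ℕ)) (v + (k : ℕ) + 1)) ⊆
          (Function.support fun x : Fin n → ℝ => (Matrix.of fun i k : Fin n => f i (x k)).det *
            (Matrix.of fun i k : Fin n => g i (x k)).det) ∩
            (Set.univ.pi fun _ : Fin n => Set.Ioi v) := by
        intro x hx
        have hx' : ∀ k : Fin n, v + (k : ℕ) < x k ∧ x k < v + (k : ℕ) + 1 :=
          fun k => hx k (Set.mem_univ _)
        have hxv : ∀ k, v < x k := fun k => by
          have := (hx' k).1
          have h0 : (0:ℝ) ≤ ((k : ℕ) : ℝ) := Nat.cast_nonneg _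
          linarith
        have hx0 : ∀ k, 0 < x k := fun k => hv.trans_lt (hxv k)
        refine ⟨?_, fun k _ => hxv k⟩
        have hinj : Function.Injective x := by
          refine StrictMono.injective fun k l hkl => ?_
          have h1 : ((k : ℕ) : ℝ) + 1 ≤ ((l : ℕ) : ℝ) := by exact_mod_cast hkl
          linarith [(hx' k).2, (hx' l).1]
        rw [Function.mem_support, hg, mul_left_comm]
        exact (mul_pos (hw x hx0) (det_mul_pos c u x hc hu hinj hx0)).ne'
      refine lt_of_lt_of_le ?_ (measure_mono hsub)
      rw [volume_pi_pi]
      simp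
    · refine ae_restrict_of_forall_mem hms fun x hx => ?_
      have hx0 : ∀ k, 0 < x k := fun k => hv.trans_lt (hx k (Set.mem_univ _))
      show 0 ≤ _ * _
      rw [hg, mul_left_comm]
      exact mul_nonneg (hw x hx0).le (det_mul_nonneg c u x hc hu hx0)
  rw [hB] at hpos
  exact pos_of_mul_pos_right hpos (Nat.cast_nonneg _)

/-- For fixed `v ≥ 0`, the function `(c,u) ↦ R_c(u,v) = Γ(c+u,v)/Γ(u,v)`
is strictly totally positive of order infinity on `(0,∞)²`. -/
theorem stmt_5 (v : ℝ) (hv : 0 ≤ v) :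
    ∀ r : ℕ, 1 ≤ r → ∀ c u : Fin r → ℝ,
      (∀ i : Fin r, 0 < c i) → (∀ i : Fin r, 0 < u i) →
      (∀ i j : Fin r, i < j → c j < c i) →
      (∀ i j : Fin r, i < j → u j < u i) →
      0 < Matrix.det (Matrix.of fun i j : Fin r =>
        upperGamma (c i + u j) v / upperGamma (u j) v) := by
  intro r _ c u hc0 hu0 hc hu
  have hD := det_gamma_pos v hv r c u hc0 hu0 (fun i j h => hc i j h) (fun i j h => hu i j h)
  have h := Matrix.det_mul_row (fun j => (upperGamma (u j) v)⁻¹)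
    (Matrix.of fun i j : Fin r => upperGamma (c i + u j) v)
  have h2 : (Matrix.of fun i j : Fin r => upperGamma (c i + u j) v / upperGamma (u j) v)
      = Matrix.of fun i j : Fin r => (upperGamma (u j) v)⁻¹ *
        (Matrix.of fun i j : Fin r => upperGamma (c i + u j) v) i j := by
    ext i j
    simp only [Matrix.of_apply]
    rw [div_eq_inv_mul]
  rw [h2, h]
  exact mul_pos (Finset.prod_pos fun j _ => inv_pos.2 (upperGamma_pos v hv _ (hu0 j))) hD
end

section
/- Define Q(u,v) = Γ(u,v)/Γ(u) for u > 0 and v ≥ 0. Fix v ∈ (0,1). Suppose c₁ > c₂ > 0 and u₁ > u₂ > 0, and let q₁, q₂ > 0 be the points satisfying Q(u₁,q₁) = v and Q(u₂,q₂) = v. Then the 2×2 determinant Γ(c₁+u₁,q₁)·Γ(c₂+u₂,q₂) − Γ(c₁+u₂,q₂)·Γ(c₂+u₁,q₁) is strictly positive. (Equivalently, for fixed v the function (c,u) ↦ Γ(c+u, Q^{−1}(u,v)) is strictly totally positive of order 2.) -/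
open MeasureTheory

lemma aux_int (u : ℝ) (hu : 0 < u) (S : Set ℝ) (hS : S ⊆ Set.Ioi 0) :
    IntegrableOn (fun x : ℝ => x ^ (u - 1) * Real.exp (-x)) S := by
  have h := Real.GammaIntegral_convergent hu
  refine (h.congr_fun (fun x _ => mul_comm _ _) measurableSet_Ioi).mono_set hS

lemma aux_pos (f : ℝ → ℝ) (S : Set ℝ) (hS : volume S ≠ 0) (hf : IntegrableOn f S)
    (hpos : ∀ᵐ x ∂(volume.restrict S), 0 < f x) : 0 < ∫ x in S, f x := by
  have hnn : 0 ≤ᵐ[volume.restrict S] f := hpos.mono fun x hx => hx.le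
  refine lt_of_le_of_ne (integral_nonneg_of_ae hnn) fun h0 => hS ?_
  have h1 := (integral_eq_zero_iff_of_nonneg_ae hnn hf).1 h0.symm
  have h2 : ∀ᵐ x ∂(volume.restrict S), False := by
    filter_upwards [h1, hpos] with x hx hx'
    simp only [Pi.zero_apply] at hx
    linarith
  rw [Filter.eventually_false_iff_eq_bot, ae_eq_bot, Measure.restrict_eq_zero] at h2
  exact h2

/-- strict inequality when `x^a` is above a level `q^a` -/
lemma aux_tail (s a q : ℝ) (hs : 0 < s) (ha : 0 < a) (hq : 0 < q) :
    q ^ a * upperGamma s q < upperGamma (s + a) q := by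
  have hsub : Set.Ioi q ⊆ Set.Ioi (0:ℝ) := Set.Ioi_subset_Ioi hq.le
  have i1 := aux_int s hs _ hsub
  have i2 := aux_int (s + a) (by linarith) _ hsub
  have i3 := i1.const_mul (q ^ a)
  have := aux_pos _ (Set.Ioi q) (by simp) (i2.sub i3) (by
    filter_upwards [ae_restrict_mem measurableSet_Ioi] with x hx
    have hx' : q < x := hx
    have hx0 : 0 < x := hq.trans hx'
    have e : x ^ (s + a - 1) = x ^ a * x ^ (s - 1) := by
      rw [← Real.rpow_add hx0]; ring_nf
    have h1 : q ^ a < x ^ a := Real.rpow_lt_rpow hq.le hx' ha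
    have h2 : 0 < x ^ (s - 1) * Real.exp (-x) := by positivity
    simp only [Pi.sub_apply, e]
    nlinarith [mul_lt_mul_of_pos_right h1 h2])
  simp only [Pi.sub_apply] at this
  rw [integral_sub i2 i3, integral_const_mul] at this
  unfold upperGamma
  linarith

lemma aux_low (s a p q : ℝ) (hs : 0 < s) (ha : 0 < a) (hp : 0 ≤ p) :
    ∫ x in Set.Ioc p q, x ^ (s + a - 1) * Real.exp (-x) ≤
      q ^ a * ∫ x in Set.Ioc p q, x ^ (s - 1) * Real.exp (-x) := by
  have hsub : Set.Ioc p q ⊆ Set.Ioi (0:ℝ) := fun x hx => lt_of_le_of_lt hp hx.1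
  have i1 := aux_int s hs _ hsub
  have i2 := aux_int (s + a) (by linarith) _ hsub
  rw [← integral_const_mul]
  refine setIntegral_mono_on i2 (i1.const_mul _) measurableSet_Ioc fun x hx => ?_
  have hx0 : 0 < x := hsub hx
  have e : x ^ (s + a - 1) = x ^ a * x ^ (s - 1) := by
    rw [← Real.rpow_add hx0]; ring_nf
  have h1 : x ^ a ≤ q ^ a := Real.rpow_le_rpow hx0.le hx.2 ha.le
  have h2 : 0 < x ^ (s - 1) * Real.exp (-x) := by positivity
  rw [e]
  nlinarith [mul_le_mul_of_nonneg_right h1 h2.le]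

lemma aux_split (s p q : ℝ) (hs : 0 < s) (hp : 0 ≤ p) (hpq : p ≤ q) :
    upperGamma s p = (∫ x in Set.Ioc p q, x ^ (s - 1) * Real.exp (-x)) + upperGamma s q := by
  unfold upperGamma
  rw [← setIntegral_union (Set.Ioc_disjoint_Ioi le_rfl) measurableSet_Ioi
    (aux_int s hs _ fun x hx => lt_of_le_of_lt hp hx.1)
    (aux_int s hs _ (Set.Ioi_subset_Ioi (hp.trans hpq))), Set.Ioc_union_Ioi_eq_Ioi hpq]

lemma aux_nonneg (s p q : ℝ) (hp : 0 ≤ p) :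
    0 ≤ ∫ x in Set.Ioc p q, x ^ (s - 1) * Real.exp (-x) := by
  refine setIntegral_nonneg measurableSet_Ioc fun x hx => ?_
  have : 0 < x := lt_of_le_of_lt hp hx.1
  positivity

lemma aux_upos (s q : ℝ) (hs : 0 < s) (hq : 0 ≤ q) : 0 < upperGamma s q := by
  refine aux_pos _ _ (by simp) (aux_int s hs _ (Set.Ioi_subset_Ioi hq)) ?_
  filter_upwards [ae_restrict_mem measurableSet_Ioi] with x hx
  have : 0 < x := lt_of_le_of_lt hq hx
  positivity

/-- strict log-convexity in the first argument -/
lemma aux_conv (s a d q : ℝ) (hs : 0 < s) (ha : 0 < a) (hd : 0 < d) (hq : 0 < q) :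
    upperGamma (s + a) q * upperGamma (s + d) q <
      upperGamma (s + a + d) q * upperGamma s q := by
  have hsub : Set.Ioi q ⊆ Set.Ioi (0:ℝ) := Set.Ioi_subset_Ioi hq.le
  have p0 := aux_upos s q hs hq.le
  have pd := aux_upos (s + d) q (by linarith) hq.le
  obtain ⟨m, hm0, hm⟩ : ∃ m : ℝ, 0 < m ∧ m ^ d = upperGamma (s + d) q / upperGamma s q := by
    refine ⟨(upperGamma (s + d) q / upperGamma s q) ^ d⁻¹, by positivity, ?_⟩
    exact Real.rpow_inv_rpow (by positivity) hd.ne'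
  have i0 := aux_int s hs _ hsub
  have ia := aux_int (s + a) (by linarith) _ hsub
  have id := aux_int (s + d) (by linarith) _ hsub
  have iad := aux_int (s + a + d) (by linarith) _ hsub
  have j1 := iad.sub (id.const_mul (m ^ a))
  have j2 := (ia.const_mul (m ^ d)).sub (i0.const_mul (m ^ a * m ^ d))
  have := aux_pos _ (Set.Ioi q) (by simp) (j1.sub j2) (by
    have hne : ∀ᵐ x ∂(volume.restrict (Set.Ioi q)), x ≠ m :=
      ae_restrict_of_ae (by simp [ae_iff])
    filter_upwards [ae_restrict_mem measurableSet_Ioi, hne] with x hx hxm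
    have hx0 : 0 < x := hq.trans hx
    have e1 : x ^ (s + a - 1) = x ^ a * x ^ (s - 1) := by
      rw [← Real.rpow_add hx0]; ring_nf
    have e2 : x ^ (s + d - 1) = x ^ d * x ^ (s - 1) := by
      rw [← Real.rpow_add hx0]; ring_nf
    have e3 : x ^ (s + a + d - 1) = x ^ a * x ^ d * x ^ (s - 1) := by
      rw [← Real.rpow_add hx0, ← Real.rpow_add hx0]; ring_nf
    have h2 : 0 < x ^ (s - 1) * Real.exp (-x) := by positivity
    have h3 : 0 < (x ^ a - m ^ a) * (x ^ d - m ^ d) := by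
      rcases lt_or_gt_of_ne hxm with h | h
      · exact mul_pos_of_neg_of_neg (sub_neg.2 (Real.rpow_lt_rpow hx0.le h ha))
          (sub_neg.2 (Real.rpow_lt_rpow hx0.le h hd))
      · exact mul_pos (sub_pos.2 (Real.rpow_lt_rpow hm0.le h ha))
          (sub_pos.2 (Real.rpow_lt_rpow hm0.le h hd))
    have h4 := mul_pos h3 h2
    simp only [Pi.sub_apply, e1, e2, e3]
    refine h4.trans_eq ?_
    ring)
  simp only [Pi.sub_apply] at this
  have k : (∫ x in Set.Ioi q, ((x ^ (s + a + d - 1) * Real.exp (-x) -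
      m ^ a * (x ^ (s + d - 1) * Real.exp (-x))) -
      (m ^ d * (x ^ (s + a - 1) * Real.exp (-x)) -
      m ^ a * m ^ d * (x ^ (s - 1) * Real.exp (-x))))) =
      (upperGamma (s + a + d) q - m ^ a * upperGamma (s + d) q) -
      (m ^ d * upperGamma (s + a) q - m ^ a * m ^ d * upperGamma s q) := by
    unfold upperGamma
    rw [← integral_const_mul, ← integral_const_mul, ← integral_const_mul,
      ← integral_sub iad (id.const_mul _), ← integral_sub (ia.const_mul _) (i0.const_mul _)]
    exact integral_sub j1 j2
  rw [k] at this
  have hm' : m ^ d * upperGamma s q = upperGamma (s + d) q := by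
    rw [hm]; field_simp
  have h5 : m ^ d * upperGamma (s + a) q < upperGamma (s + a + d) q := by
    have : m ^ a * m ^ d * upperGamma s q = m ^ a * upperGamma (s + d) q := by
      rw [mul_assoc, hm']
    linarith
  calc _ = m ^ d * upperGamma (s + a) q * upperGamma s q := by rw [← hm']; ring
    _ < _ := mul_lt_mul_of_pos_right h5 p0

/-- Fix `v ∈ (0,1)`. For `c₁ > c₂ > 0` and `u₁ > u₂ > 0`, with
`q₁, q₂ > 0` the points where `Q(u₁,q₁) = v` and `Q(u₂,q₂) = v`
(`Q(u,q) = Γ(u,q)/Γ(u)`, `Γ(u) = Γ(u,0)`), the determinant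
`Γ(c₁+u₁,q₁)Γ(c₂+u₂,q₂) − Γ(c₁+u₂,q₂)Γ(c₂+u₁,q₁)` is strictly positive;
i.e. `(c,u) ↦ Γ(c+u, Q⁻¹(u,v))` is STP₂. -/
theorem stmt_9 (v : ℝ) (hv0 : 0 < v) (hv1 : v < 1)
    (c1 c2 u1 u2 : ℝ) (hc2 : 0 < c2) (hc : c2 < c1) (hu2 : 0 < u2) (hu : u2 < u1)
    (q1 q2 : ℝ) (hq1 : 0 < q1) (hq2 : 0 < q2)
    (hQ1 : upperGamma u1 q1 / upperGamma u1 0 = v)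
    (hQ2 : upperGamma u2 q2 / upperGamma u2 0 = v) :
    0 < upperGamma (c1 + u1) q1 * upperGamma (c2 + u2) q2 -
        upperGamma (c1 + u2) q2 * upperGamma (c2 + u1) q1 := by
  obtain ⟨d, rfl⟩ : ∃ d, u1 = u2 + d := ⟨u1 - u2, by ring⟩
  obtain ⟨a, rfl⟩ : ∃ a, c1 = c2 + a := ⟨c1 - c2, by ring⟩
  have hd : 0 < d := by linarith
  have ha : 0 < a := by linarith
  have hqq : q2 ≤ q1 := by
    by_contra hlt
    push Not at hlt
    have P1 := aux_upos (u2 + d) 0 (by linarith) le_rfl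
    have P2 := aux_upos u2 0 hu2 le_rfl
    have hmono : upperGamma (u2 + d) q2 ≤ upperGamma (u2 + d) q1 := by
      rw [aux_split (u2 + d) q1 q2 (by linarith) hq1.le hlt.le]
      linarith [aux_nonneg (u2 + d) q1 q2 hq1.le]
    have t := aux_tail u2 d q2 hu2 hd hq2
    have l := aux_low u2 d 0 q2 hu2 hd le_rfl
    have s1 := aux_split (u2 + d) 0 q2 (by linarith) le_rfl hq2.le
    have s2 := aux_split u2 0 q2 hu2 le_rfl hq2.le
    have n2 := aux_upos u2 q2 hu2 hq2.le
    rw [div_eq_iff P1.ne'] at hQ1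
    rw [div_eq_iff P2.ne'] at hQ2
    set G1 := ∫ x in Set.Ioc 0 q2, x ^ (u2 + d - 1) * Real.exp (-x)
    set G2 := ∫ x in Set.Ioc 0 q2, x ^ (u2 - 1) * Real.exp (-x)
    have hp : 0 < q2 ^ d := by positivity
    rw [s1] at hQ1
    rw [s2] at hQ2
    -- (1-v) U2 = v G2,  (1-v) U1 ≤ v G1
    have e2 : (1 - v) * upperGamma u2 q2 = v * G2 := by linarith
    have e1 : (1 - v) * upperGamma (u2 + d) q2 ≤ v * G1 := by linarith
    have f1 := mul_lt_mul_of_pos_left t (sub_pos.2 hv1)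
    have f2 := mul_le_mul_of_nonneg_left l hv0.le
    have f3 : (1 - v) * (q2 ^ d * upperGamma u2 q2) = v * (q2 ^ d * G2) := by
      linear_combination q2 ^ d * e2
    linarith
  have hs : 0 < c2 + u2 := by linarith
  have E1 : c2 + a + (u2 + d) = (c2 + u2) + a + d := by ring
  have E1' : c2 + a + (u2 + d) = (c2 + (u2 + d)) + a := by ring
  have E2 : c2 + a + u2 = (c2 + u2) + a := by ring
  have E3 : c2 + (u2 + d) = (c2 + u2) + d := by ring
  have t := aux_tail (c2 + (u2 + d)) a q1 (by linarith) ha hq1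
  rw [← E1', E3, E1] at t
  have cv := aux_conv (c2 + u2) a d q1 hs ha hd hq1
  have l := aux_low (c2 + u2) a q2 q1 hs ha hq2.le
  have n := aux_nonneg (c2 + u2) q2 q1 hq2.le
  have pA := aux_upos (c2 + u2 + d) q1 (by linarith) hq1.le
  rw [E1, E2, E3, aux_split (c2 + u2) q2 q1 hs hq2.le hqq,
    aux_split (c2 + u2 + a) q2 q1 (by linarith) hq2.le hqq]
  have g1 := mul_le_mul_of_nonneg_right l pA.le
  have g2 := mul_le_mul_of_nonneg_right t.le n
  nlinarith [g1, g2, cv]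
end
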